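/- arXiv:2306.08518 — 6 statements merged into one kernel-verified Lean document; each statement's English description precedes it below -/
import Mathlib

section
/- Let ρ ∈ (0,1] and κ ∈ (0,1]. There exist constants C ≥ 1 and θ ∈ (0,1), depending only on ρ and κ, with the following property: for every a ∈ ℝ, every s > 0, every M > 0, every function g : [a, a+s] → ℝ that is infinitely differentiable on [a, a+s] and satisfies |g^{(k)}(x)| ≤ M · k! · (sρ)^{-k} for all x ∈ [a, a+s] and all k ∈ ℕ, and every Lebesgue measurable set F ⊆ [a, a+s] with |F| ≥ κ s, one has sup_{x ∈ [a,a+s]} |g(x)| ≤ C · M^{1-θ} · ( (1/|F|) ∫_F |g(x)| dx )^{θ}. -/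
open MeasureTheory Set

lemma psm_points (η : ℝ) (hη : 0 < η) (n : ℕ) : ∀ (E : Set ℝ), BddBelow E →
    ENNReal.ofReal (n * η) < volume E →
    ∃ x : ℕ → ℝ, (∀ i ≤ n, x i ∈ E) ∧
      ∀ i j, i ≤ j → j ≤ n → ((j:ℝ) - i) * η ≤ x j - x i := by
  induction n with
  | zero =>
    intro E _ hE
    have : E.Nonempty := by
      rw [nonempty_iff_ne_empty]; rintro rfl; simp at hE
    obtain ⟨e, he⟩ := this
    refine ⟨fun _ => e, fun _ _ => he, fun i j h1 h2 => ?_⟩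
    have : i = 0 := by omega
    have : j = 0 := by omega
    subst_vars; simp
  | succ n ih =>
    intro E hb hE
    have hne : E.Nonempty := by
      rw [nonempty_iff_ne_empty]; rintro rfl; simp at hE
    obtain ⟨w, hw1, hw2⟩ := ENNReal.lt_iff_exists_real_btwn.1 hE |>.imp fun w hw => hw.2
    have hw1' : ((n+1 : ℕ):ℝ) * η < w := by
      exact (ENNReal.ofReal_lt_ofReal_iff_of_nonneg (by positivity)).1 hw1
    push_cast at hw1'
    obtain ⟨e, he, hlt⟩ := exists_lt_of_csInf_lt hne
      (show sInf E < sInf E + (w - (n+1)*η) by linarith)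
    have hsub : E ⊆ Icc (sInf E) (e + η) ∪ (E ∩ Ici (e + η)) := by
      intro y hy
      rcases le_total y (e + η) with h | h
      · exact Or.inl ⟨csInf_le hb hy, h⟩
      · exact Or.inr ⟨hy, h⟩
    have hv : volume E ≤ ENNReal.ofReal (e + η - sInf E) + volume (E ∩ Ici (e + η)) := by
      refine (measure_mono hsub).trans ((measure_union_le _ _).trans ?_)
      rw [Real.volume_Icc]
    have hE' : ENNReal.ofReal (n * η) < volume (E ∩ Ici (e + η)) := by
      by_contra hcon
      push Not at hcon
      have h1 : volume E ≤ ENNReal.ofReal (e + η - sInf E) + ENNReal.ofReal (n * η) :=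
        hv.trans (by gcongr)
      have : sInf E ≤ e := csInf_le hb he
      rw [← ENNReal.ofReal_add (by linarith) (by positivity)] at h1
      have h2 := lt_of_lt_of_le hw2 h1
      rw [ENNReal.ofReal_lt_ofReal_iff_of_nonneg (by nlinarith [mul_nonneg (Nat.cast_nonneg (α := ℝ) n) hη.le])] at h2
      nlinarith
    obtain ⟨x, hx1, hx2⟩ := ih _ (hb.mono inter_subset_left) hE'
    refine ⟨fun i => Nat.casesOn i e x, ?_, ?_⟩
    · intro i hi
      cases i with
      | zero => exact he
      | succ i => exact (hx1 i (by omega)).1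
    · intro i j hij hj
      cases j with
      | zero =>
        have : i = 0 := by omega
        subst this; simp
      | succ j =>
        cases i with
        | succ i =>
          have := hx2 i j (by omega) (by omega)
          simp only; push_cast; linarith
        | zero =>
          have h1 := hx2 0 j (by omega) (by omega)
          have h2 := (hx1 0 (by omega)).2
          simp only [mem_Ici] at h2
          show ((j+1 : ℕ) - ((0:ℕ):ℝ)) * η ≤ x j - e
          push_cast at *; linarith

lemma psm_prod (n i : ℕ) (hi : i ≤ n) :
    ∏ j ∈ (Finset.range (n+1)).erase i, |(i:ℝ) - j| = (i.factorial : ℝ) * (n-i).factorial := by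
  have hs : (Finset.range (n+1)).erase i = Finset.range i ∪ Finset.Ico (i+1) (n+1) := by
    ext j; simp; omega
  rw [hs, Finset.prod_union]
  · congr 1
    · rw [← Finset.prod_range_add_one_eq_factorial, ← Finset.prod_range_reflect]
      push_cast
      apply Finset.prod_congr rfl
      intro j hj
      have hj := Finset.mem_range.1 hj
      rw [← Finset.mem_range] at hj
      have hj' := Finset.mem_range.1 hj
      have : ((i - 1 - j : ℕ) : ℝ) = i - 1 - j := by
        rw [Nat.cast_sub (by omega), Nat.cast_sub (by omega)]; simp
      rw [this]
      have : (j:ℝ) + 1 ≤ i := by exact_mod_cast hj'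
      have h0 : (0:ℝ) ≤ j := by positivity
      rw [abs_of_nonneg (by linarith)]; ring
    · rw [← Finset.prod_range_add_one_eq_factorial, Finset.prod_Ico_eq_prod_range]
      push_cast
      apply Finset.prod_congr rfl
      intro j hj
      have h0 : (0:ℝ) ≤ j := by positivity
      rw [abs_of_nonpos (by linarith)]; ring
  · rw [Finset.disjoint_left]; intro j; simp; omega

lemma psm_lagrange (n : ℕ) (P : Polynomial ℝ) (hP : P.degree < ((n+1 : ℕ) : WithBot ℕ))
    (u r η B : ℝ) (hη : 0 < η) (hr : 0 < r) (x : ℕ → ℝ)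
    (hx : ∀ i ≤ n, x i ∈ Icc u (u + r))
    (hs : ∀ i j, i ≤ j → j ≤ n → ((j:ℝ) - i) * η ≤ x j - x i)
    (hB : ∀ i ≤ n, |P.eval (x i)| ≤ B) (y : ℝ) (hy : y ∈ Icc u (u + r)) :
    |P.eval y| ≤ B * ((r / η) ^ n * 2 ^ n / n.factorial) := by
  have hsep : ∀ i ≤ n, ∀ j ≤ n, |(i:ℝ) - j| * η ≤ |x i - x j| := by
    intro i hi j hj
    rcases le_total i j with h | h
    · have := hs i j h hj
      have h' : (i:ℝ) ≤ j := by exact_mod_cast h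
      rw [abs_sub_comm, abs_sub_comm (x i), abs_of_nonneg (by linarith : (0:ℝ) ≤ j - i)]
      exact this.trans (le_abs_self _)
    · have := hs j i h hi
      have h' : (j:ℝ) ≤ i := by exact_mod_cast h
      rw [abs_of_nonneg (by linarith : (0:ℝ) ≤ i - j)]
      exact this.trans (le_abs_self _)
  have hinj : Set.InjOn x (Finset.range (n+1) : Finset ℕ) := by
    intro i hi j hj hij
    simp at hi hj
    have := hsep i (by omega) j (by omega)
    rw [hij] at this
    simp at this
    have h3 : |(i:ℝ) - j| ≤ 0 := by
      by_contra hc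
      push Not at hc
      nlinarith [mul_pos hc hη]
    have h4 := abs_nonpos_iff.1 h3
    have : (i:ℝ) = j := by linarith
    exact_mod_cast this
  have hB0 : 0 ≤ B := (abs_nonneg _).trans (hB 0 (by omega))
  have hPe : P = Lagrange.interpolate (Finset.range (n+1)) x (fun i => P.eval (x i)) :=
    Lagrange.eq_interpolate hinj (by simpa using hP)
  have hval : P.eval y = ∑ i ∈ Finset.range (n+1), P.eval (x i) *
      (Lagrange.basis (Finset.range (n+1)) x i).eval y := by
    conv_lhs => rw [hPe]
    simp [Lagrange.interpolate_apply, Polynomial.eval_finsetSum]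
  have hbas : ∀ i ∈ Finset.range (n+1), |(Lagrange.basis (Finset.range (n+1)) x i).eval y| ≤
      (r / η)^n * ((n.choose i : ℝ) / n.factorial) := by
    intro i hi
    have hi' : i ≤ n := by simp at hi; omega
    unfold Lagrange.basis
    rw [Polynomial.eval_prod, Finset.abs_prod]
    have : ∀ j ∈ (Finset.range (n+1)).erase i,
        |(Lagrange.basisDivisor (x i) (x j)).eval y| ≤ (r/η) * |(i:ℝ) - j|⁻¹ := by
      intro j hj
      simp at hj
      have h1 := hsep i hi' j (by omega)
      have h2 := hx j (by omega)
      have h3 : |y - x j| ≤ r := by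
        rw [abs_le]; constructor <;> linarith [hy.1, hy.2, h2.1, h2.2]
      have h4 : 0 < |(i:ℝ) - j| := by
        rw [abs_pos, sub_ne_zero]; exact_mod_cast Ne.symm hj.1
      simp only [Lagrange.basisDivisor, Polynomial.eval_mul, Polynomial.eval_C,
        Polynomial.eval_sub, Polynomial.eval_X, abs_mul, abs_inv]
      calc |x i - x j|⁻¹ * |y - x j| ≤ (|(i:ℝ) - j| * η)⁻¹ * r := by gcongr
        _ = _ := by field_simp
    refine (Finset.prod_le_prod (fun _ _ => abs_nonneg _) this).trans (le_of_eq ?_)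
    rw [Finset.prod_mul_distrib, Finset.prod_const, Finset.card_erase_of_mem hi,
      Finset.card_range, Finset.prod_inv_distrib, psm_prod n i hi', Nat.cast_choose ℝ hi']
    have := Nat.factorial_pos i
    have := Nat.factorial_pos n
    have := Nat.factorial_pos (n-i)
    simp only [Nat.add_sub_cancel]
    field_simp
  rw [hval]
  calc _ ≤ ∑ i ∈ Finset.range (n+1), |P.eval (x i) *
      (Lagrange.basis (Finset.range (n+1)) x i).eval y| := Finset.abs_sum_le_sum_abs _ _
    _ ≤ ∑ i ∈ Finset.range (n+1), B * ((r / η)^n * ((n.choose i : ℝ) / n.factorial)) := by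
        apply Finset.sum_le_sum
        intro i hi
        rw [abs_mul]
        have := hbas i hi
        have := hB i (by simp at hi; omega)
        gcongr
    _ = _ := by
        rw [← Finset.mul_sum, ← Finset.mul_sum, ← Finset.sum_div, ← Nat.cast_sum,
          Nat.sum_range_choose]
        push_cast; ring

lemma psm_taylor (g : ℝ → ℝ) (a b R M : ℝ) (hR : 0 < R) (hM : 0 < M)
    (hg : ContDiffOn ℝ (⊤ : ℕ∞) g (Icc a b))
    (hb : ∀ k : ℕ, ∀ x ∈ Icc a b, |iteratedDerivWithin k g (Icc a b) x| ≤
            M * (Nat.factorial k) * (R ^ k)⁻¹)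
    (u r : ℝ) (hr : 0 < r) (hu : a ≤ u) (hur : u + r ≤ b) (n : ℕ) :
    ∃ P : Polynomial ℝ, P.degree < ((n+1 : ℕ) : WithBot ℕ) ∧
      ∀ y ∈ Icc u (u + r), |g y - P.eval y| ≤ M * (2 * (r / R)) ^ (n+1) := by
  have hsub : Icc u (u+r) ⊆ Icc a b := Icc_subset_Icc hu hur
  have hud : UniqueDiffOn ℝ (Icc u (u+r)) := uniqueDiffOn_Icc (by linarith)
  have hud' : UniqueDiffOn ℝ (Icc a b) := uniqueDiffOn_Icc (by linarith)
  have heq : ∀ k : ℕ, ∀ y ∈ Icc u (u+r), iteratedDerivWithin k g (Icc u (u+r)) y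
      = iteratedDerivWithin k g (Icc a b) y := by
    intro k y hy
    unfold iteratedDerivWithin
    rw [iteratedFDerivWithin_subset hsub hud hud' (hg.of_le (by exact_mod_cast le_top)) hy]
  refine ⟨∑ k ∈ Finset.range (n+1), Polynomial.C (((k.factorial : ℝ)⁻¹) *
    iteratedDerivWithin k g (Icc u (u+r)) u) * (Polynomial.X - Polynomial.C u)^k, ?_, ?_⟩
  · rw [← Polynomial.mem_degreeLT]
    apply Submodule.sum_mem
    intro k hk
    rw [Polynomial.mem_degreeLT]
    have hk' := Finset.mem_range.1 hk
    rw [← Polynomial.smul_eq_C_mul]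
    refine (Polynomial.degree_smul_le _ _).trans_lt ?_
    rw [Polynomial.degree_pow, Polynomial.degree_X_sub_C, nsmul_one]
    exact_mod_cast hk'
  · intro y hy
    have h := taylor_mean_remainder_bound (n := n) (f := g) (a := u) (b := u + r) (x := y)
      (C := M * (Nat.factorial (n+1)) * (R ^ (n+1))⁻¹) (by linarith)
      ((hg.mono hsub).of_le (by exact_mod_cast le_top)) hy (by
        intro z hz
        rw [heq _ z hz]
        exact hb _ z (hsub hz))
    rw [taylor_within_apply] at h
    have he : (∑ k ∈ Finset.range (n+1), Polynomial.C (((k.factorial : ℝ)⁻¹) *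
      iteratedDerivWithin k g (Icc u (u+r)) u) * (Polynomial.X - Polynomial.C u)^k).eval y =
      ∑ k ∈ Finset.range (n + 1), (((k.factorial : ℝ))⁻¹ * (y - u) ^ k) •
        iteratedDerivWithin k g (Icc u (u + r)) u := by
      rw [Polynomial.eval_finsetSum]
      apply Finset.sum_congr rfl
      intro k _
      simp; ring
    rw [he]
    refine h.trans ?_
    have h1 : (y - u)^(n+1) ≤ r^(n+1) := by
      have := hy.1; have := hy.2
      apply pow_le_pow_left₀ <;> linarith
    have h2 : ((n:ℝ)+1) ≤ 2^(n+1) := by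
      exact_mod_cast (Nat.lt_two_pow_self (n := n+1)).le
    have hf := Nat.factorial_pos n
    calc _ ≤ M * (Nat.factorial (n+1)) * (R ^ (n+1))⁻¹ * r^(n+1) / n.factorial := by gcongr
      _ = M * (((n:ℝ)+1) * (r/R)^(n+1)) := by
        rw [Nat.factorial_succ, div_pow]; push_cast; field_simp
      _ ≤ M * (2^(n+1) * (r/R)^(n+1)) := by gcongr
      _ = _ := by rw [mul_pow]

lemma psm_local (g : ℝ → ℝ) (a b R M : ℝ) (hR : 0 < R) (hM : 0 < M)
    (hg : ContDiffOn ℝ (⊤ : ℕ∞) g (Icc a b))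
    (hb : ∀ k : ℕ, ∀ x ∈ Icc a b, |iteratedDerivWithin k g (Icc a b) x| ≤
            M * (Nat.factorial k) * (R ^ k)⁻¹)
    (u r : ℝ) (hr : 0 < r) (hu : a ≤ u) (hur : u + r ≤ b)
    (δ : ℝ) (hδ : 0 < δ) (hδ1 : δ ≤ 1) (hrR : r / R ≤ δ / 24)
    (E : Set ℝ) (hE : E ⊆ Icc u (u + r)) (hvE : ENNReal.ofReal (δ * r) ≤ volume E)
    (A : ℝ) (hA : 0 ≤ A) (hgA : ∀ x ∈ E, |g x| ≤ A) (m : ℕ) :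
    ∀ y ∈ Icc u (u + r), |g y| ≤ A * (6 / δ) ^ m + 2 * M * (1 / 2) ^ m := by
  intro y hy
  cases m with
  | zero =>
    have := hb 0 y ⟨hu.trans hy.1, hy.2.trans hur⟩
    simp at this
    simp; linarith
  | succ n =>
    obtain ⟨P, hPd, hP⟩ := psm_taylor g a b R M hR hM hg hb u r hr hu hur n
    set ε := M * (2 * (r / R)) ^ (n+1) with hε
    have hη : 0 < δ * r / (n+1) := by positivity
    obtain ⟨x, hx1, hx2⟩ := psm_points (δ * r / (n+1)) hη n E (bddBelow_Icc.mono hE) (by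
      refine lt_of_lt_of_le ?_ hvE
      rw [ENNReal.ofReal_lt_ofReal_iff (by positivity)]
      have : (n:ℝ) * (δ * r / (n+1)) = δ * r * (n / (n+1)) := by ring
      rw [this]
      have h1 : (n:ℝ)/(n+1) < 1 := by rw [div_lt_one (by positivity)]; linarith
      nlinarith [mul_pos hδ hr])
    have hL := psm_lagrange n P hPd u r _ (A + ε) hη hr x (fun i hi => hE (hx1 i hi)) hx2
      (by
        intro i hi
        have h1 := hP _ (hE (hx1 i hi))
        have h2 := hgA _ (hx1 i hi)
        rw [abs_le] at *
        constructor <;> linarith) y hy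
    have hε0 : 0 ≤ ε := by positivity
    have hK : (r / (δ * r / (n+1))) ^ n * 2 ^ n / n.factorial ≤ (6 / δ)^(n+1) := by
      have e1 : r / (δ * r / (n+1)) = ((n:ℝ)+1) * δ⁻¹ := by field_simp
      rw [e1, mul_pow]
      have h1 : ((n:ℝ)+1)^n / n.factorial ≤ 3^(n+1) := by
        refine (Real.pow_div_factorial_le_exp ((n:ℝ)+1) (by positivity) n).trans ?_
        have : Real.exp ((n:ℝ)+1) = Real.exp 1 ^ (n+1) := by
          rw [← Real.exp_nat_mul]; push_cast; ring_nf
        rw [this]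
        have := Real.exp_one_lt_d9
        gcongr
        linarith
      have h2 : (2 * δ⁻¹)^n ≤ (2 * δ⁻¹)^(n+1) := by
        apply pow_le_pow_right₀ _ (by omega)
        have := (one_le_inv₀ hδ).2 hδ1
        linarith
      calc _ = (((n:ℝ)+1)^n / n.factorial) * (2 * δ⁻¹)^n := by rw [mul_pow]; ring
        _ ≤ 3^(n+1) * (2 * δ⁻¹)^(n+1) := by gcongr
        _ = _ := by rw [← mul_pow]; congr 1; field_simp; norm_num
    have hK1 : 1 ≤ (6/δ)^(n+1) := by
      apply one_le_pow₀
      rw [le_div_iff₀ hδ]; linarith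
    have h3 : |P.eval y| ≤ (A + ε) * (6 / δ)^(n+1) :=
      hL.trans (by gcongr)
    have h4 : ε * (6 / δ)^(n+1) ≤ M * (1/2)^(n+1) := by
      rw [hε, mul_assoc, ← mul_pow]
      gcongr
      calc 2 * (r / R) * (6 / δ) ≤ 2 * (δ / 24) * (6 / δ) := by gcongr
        _ = 1/2 := by field_simp; norm_num
    have h5 : ε ≤ ε * (6/δ)^(n+1) := by nlinarith
    have h6 := hP y hy
    have h7 : |g y| ≤ |g y - P.eval y| + |P.eval y| := by
      have := abs_add_le (g y - P.eval y) (P.eval y)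
      simpa using this
    linarith

lemma psm_opt (K : ℝ) (hK : 1 < K) : ∃ θ : ℝ, θ ∈ Ioo (0:ℝ) 1 ∧ ∀ (A M z : ℝ), 0 < A → 0 < M →
    z ≤ M → (∀ m : ℕ, z ≤ A * K ^ m + 2 * M * (1 / 2) ^ m) → z ≤ 6 * M * (A / M) ^ θ := by
  have hl2 : 0 < Real.log 2 := Real.log_pos (by norm_num)
  have hlK : 0 < Real.log K := Real.log_pos hK
  have hlog : Real.log (2 * K) = Real.log 2 + Real.log K :=
    Real.log_mul (by norm_num) (by linarith)
  set θ := Real.log 2 / Real.log (2 * K) with hθ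
  have hθ0 : 0 < θ := by rw [hθ, hlog]; positivity
  refine ⟨θ, ⟨hθ0, ?_⟩, ?_⟩
  · rw [hθ, hlog, div_lt_one (by positivity)]; linarith
  · intro A M z hA hM hzM hz
    rcases le_total M A with h | h
    · have : 1 ≤ (A / M)^θ := Real.one_le_rpow ((one_le_div hM).2 h) hθ0.le
      nlinarith
    · obtain ⟨n, hn1, hn2⟩ := exists_nat_pow_near (x := M / A) (y := 2 * K)
        ((one_le_div hA).2 h) (by linarith)
      have h2K : (2 * K) ^ θ = 2 := by
        rw [Real.rpow_def_of_pos (by linarith), hθ, mul_div_cancel₀ _ (by rw [hlog]; positivity),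
          Real.exp_log (by norm_num)]
      have h1 : (1/2:ℝ)^(n+1) ≤ (A / M)^θ := by
        have h3 : ((2*K)^(n+1))⁻¹ ≤ A / M := by
          rw [← inv_div M A]
          gcongr
        calc (1/2:ℝ)^(n+1) = (((2*K)^(n+1))⁻¹)^θ := by
              rw [Real.inv_rpow (by positivity), ← Real.rpow_natCast (2*K), ← Real.rpow_mul (by positivity),
                mul_comm _ θ, Real.rpow_mul (by positivity), h2K, Real.rpow_natCast, one_div, inv_pow]
          _ ≤ _ := Real.rpow_le_rpow (by positivity) h3 hθ0.le
      have h4 : A * K^n ≤ M * (1/2)^n := by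
        rw [le_div_iff₀ hA, mul_pow] at hn1
        rw [one_div, inv_pow, ← div_eq_mul_inv, le_div_iff₀ (by positivity)]
        linarith
      have h5 := hz n
      rw [pow_succ] at h1
      have h6 : M * ((1/2)^n * (1/2)) ≤ M * (A/M)^θ := by gcongr
      linarith

lemma psm_chain (g : ℝ → ℝ) (a b M δ θ r : ℝ) (hM : 0 < M) (hθ : θ ∈ Ioo (0:ℝ) 1) (hδ : δ ≤ 1/2)
    (hr : 0 < r)
    (H : ∀ (u : ℝ) (E : Set ℝ) (A : ℝ), a ≤ u → u + r ≤ b → E ⊆ Icc u (u + r) →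
      ENNReal.ofReal (δ * r) ≤ volume E → 0 < A → (∀ x ∈ E, |g x| ≤ A) →
      ∀ y ∈ Icc u (u + r), |g y| ≤ 6 * M * (A / M) ^ θ)
    (c A : ℝ) (hc1 : a ≤ c) (hc2 : c + r ≤ b) (hA : 0 < A)
    (hgA : ∀ y ∈ Icc c (c + r), |g y| ≤ A) (k : ℕ) :
    ∀ c' : ℝ, a ≤ c' → c' + r ≤ b → |c - c'| ≤ k * (r / 2) →
      ∀ y ∈ Icc c' (c' + r), |g y| ≤ 6 ^ k * M * (A / M) ^ (θ ^ k) := by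
  induction k with
  | zero =>
    intro c' _ _ h y hy
    simp at h
    have : c = c' := by linarith
    subst this
    have := hgA y hy
    simp
    rwa [mul_div_cancel₀ _ hM.ne']
  | succ k ih =>
    intro c' h1 h2 h y hy
    have hk : (0:ℝ) < k + 1 := by positivity
    push_cast at h
    set t : ℝ := 1 / (k+1) with ht
    have ht0 : 0 < t := by positivity
    have ht1 : t ≤ 1 := by rw [ht, div_le_one hk]; linarith [Nat.cast_nonneg (α := ℝ) k]
    have htk : t * (k+1) = 1 := by rw [ht]; field_simp
    set c'' := c' + t * (c - c') with hc''
    have e1 : |c'' - c'| ≤ r / 2 := by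
      rw [hc'', add_sub_cancel_left, abs_mul, abs_of_pos ht0]
      calc t * |c - c'| ≤ t * ((k+1) * (r/2)) := by gcongr
        _ = r/2 := by rw [← mul_assoc, htk, one_mul]
    have e2 : |c - c''| ≤ k * (r/2) := by
      have : c - c'' = (1 - t) * (c - c') := by rw [hc'']; ring
      rw [this, abs_mul, abs_of_nonneg (by linarith)]
      calc (1-t) * |c - c'| ≤ (1-t) * ((k+1) * (r/2)) := by
            apply mul_le_mul_of_nonneg_left h; linarith
        _ = k * (r/2) := by linear_combination (-(r/2)) * htk
    have b1 : a ≤ c'' := by rw [hc'']; nlinarith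
    have b2 : c'' + r ≤ b := by rw [hc'']; nlinarith
    have h3 := ih c'' b1 b2 e2
    set B := 6 ^ k * M * (A / M) ^ (θ ^ k) with hB
    have hAM : 0 < A / M := by positivity
    have hpos : 0 < (A / M) ^ (θ ^ k) := Real.rpow_pos_of_pos hAM _
    have hB0 : 0 < B := by positivity
    rw [abs_le] at e1
    have h4 := H c' (Icc (max c' c'') (min (c' + r) (c'' + r))) B h1 h2
      (Icc_subset_Icc (le_max_left _ _) (min_le_left _ _))
      (by
        rw [Real.volume_Icc]
        apply ENNReal.ofReal_le_ofReal
        have : δ * r ≤ r / 2 := by nlinarith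
        rcases max_cases c' c'' with h | h <;> rcases min_cases (c' + r) (c'' + r) with h' | h' <;>
          rw [h.1, h'.1] <;> linarith)
      hB0 (fun x hx => h3 x ⟨(le_max_right _ _).trans hx.1, hx.2.trans (min_le_right _ _)⟩) y hy
    refine h4.trans ?_
    have e3 : B / M = 6 ^ k * (A / M) ^ (θ ^ k) := by rw [hB]; field_simp
    rw [e3, Real.mul_rpow (by positivity) hpos.le, ← Real.rpow_mul hAM.le, ← pow_succ]
    have e4 : ((6:ℝ) ^ k) ^ θ ≤ 6 ^ k := by
      have := Real.rpow_le_rpow_of_exponent_le (x := (6:ℝ)^k) (one_le_pow₀ (by norm_num)) hθ.2.le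
      simpa using this
    have hpos' : 0 < (A / M) ^ (θ ^ (k+1)) := Real.rpow_pos_of_pos hAM _
    calc _ ≤ 6 * M * (6 ^ k * (A / M) ^ (θ ^ (k+1))) := by gcongr
      _ = _ := by ring

lemma psm_pigeon (a s r d : ℝ) (hr : 0 < r) (hrs : r ≤ s) (E : Set ℝ)
    (hE : E ⊆ Icc a (a + s)) (hd : 0 < d) (hv : ENNReal.ofReal (d * s) ≤ volume E) :
    ∃ c, a ≤ c ∧ c + r ≤ a + s ∧ ENNReal.ofReal (d / 2 * r) ≤ volume (E ∩ Icc c (c + r)) := by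
  by_contra hcon
  push Not at hcon
  set N := ⌈s / r⌉₊ with hN
  have hN1 : s ≤ N * r := by
    rw [← div_le_iff₀ hr]; exact Nat.le_ceil _
  have hN2 : N * r < s + r := by
    have h := Nat.ceil_lt_add_one (div_nonneg (hr.le.trans hrs) hr.le)
    rw [← hN] at h
    have := mul_lt_mul_of_pos_right h hr
    rw [add_mul, div_mul_cancel₀ _ hr.ne'] at this
    linarith
  have hN0 : 0 < N := by
    rw [hN, Nat.ceil_pos]; exact div_pos (by linarith) hr
  set w : ℕ → ℝ := fun i => a + min (i * r) (s - r) with hw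
  have hcov : E ⊆ ⋃ i ∈ Finset.range N, E ∩ Icc (w i) (w i + r) := by
    intro x hx
    have hxx := hE hx
    simp only [mem_iUnion]
    by_cases hxs : x < a + s
    · have h0 : 0 ≤ (x - a) / r := div_nonneg (by linarith [hxx.1]) hr.le
      have f1 := Nat.floor_le h0
      have f2 := Nat.lt_floor_add_one ((x - a)/r)
      rw [le_div_iff₀ hr] at f1
      rw [div_lt_iff₀ hr] at f2
      set i := ⌊(x - a)/r⌋₊
      refine ⟨i, ?_, hx, ?_, ?_⟩
      · rw [Finset.mem_range]
        have : (i:ℝ) * r < N * r := by linarith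
        exact_mod_cast lt_of_mul_lt_mul_right this hr.le
      · have := min_le_left (i * r) (s - r); simp only [hw]; linarith
      · simp only [hw]
        rcases min_cases ((i:ℝ) * r) (s - r) with h | h <;> rw [h.1] <;> linarith [hxx.2]
    · refine ⟨N - 1, by rw [Finset.mem_range]; omega, hx, ?_, ?_⟩
      · have := min_le_right (((N-1:ℕ):ℝ) * r) (s - r); simp only [hw]; linarith
      · have : (((N-1:ℕ):ℝ)) = N - 1 := by rw [Nat.cast_sub (by omega)]; simp
        simp only [hw]
        rw [this, min_eq_right (by linarith)]; linarith [hxx.2]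
  have h1 : volume E < ∑ i ∈ Finset.range N, ENNReal.ofReal (d / 2 * r) := by
    refine ((measure_mono hcov).trans (measure_biUnion_finset_le _ _)).trans_lt ?_
    apply ENNReal.sum_lt_sum_of_nonempty
    · simpa using hN0.ne'
    · intro i _
      apply hcon
      · simp only [hw]
        have : 0 ≤ min ((i:ℝ) * r) (s - r) := le_min (by positivity) (by linarith)
        linarith
      · have := min_le_right ((i:ℝ) * r) (s - r); simp only [hw]; linarith
  rw [Finset.sum_const, Finset.card_range, ← ENNReal.ofReal_nsmul] at h1
  have h2 := hv.trans_lt h1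
  rw [ENNReal.ofReal_lt_ofReal_iff_of_nonneg (by nlinarith)] at h2
  simp at h2
  nlinarith

lemma psm_markov (s κ A' : ℝ) (g : ℝ → ℝ) (F : Set ℝ) (hs : 0 < s) (hκ : 0 < κ)
    (hA' : 0 < A') (hF : MeasurableSet F) (hfin : volume F ≠ ⊤)
    (hV : ENNReal.ofReal (κ * s) ≤ volume F) (hint : IntegrableOn (fun y => |g y|) F)
    (h : (((volume F).toReal)⁻¹ * ∫ y in F, |g y|) < A') :
    ENNReal.ofReal (κ / 2 * s) ≤ volume {y ∈ F | |g y| ≤ 2 * A'} := by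
  have hVr : κ * s ≤ (volume F).toReal := (ENNReal.ofReal_le_iff_le_toReal hfin).1 hV
  have hV0 : 0 < (volume F).toReal := lt_of_lt_of_le (by positivity) hVr
  have hm := mul_meas_ge_le_integral_of_nonneg (μ := volume.restrict F) (f := fun y => |g y|)
    (Filter.Eventually.of_forall fun y => abs_nonneg (g y)) hint (2 * A')
  have hI : ∫ y in F, |g y| ≤ A' * (volume F).toReal := by
    rw [inv_mul_lt_iff₀ hV0] at h; linarith
  have hm2 : (volume.restrict F).real {x | 2 * A' ≤ |g x|} ≤ (volume F).toReal / 2 := by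
    have := hm.trans hI
    by_contra hc
    push Not at hc
    nlinarith
  rw [measureReal_def, Measure.restrict_apply' hF, ← measureReal_def] at hm2
  have hsub : F ⊆ {y ∈ F | |g y| ≤ 2 * A'} ∪ ({x | 2 * A' ≤ |g x|} ∩ F) := by
    intro y hy
    rcases le_total (|g y|) (2 * A') with h | h
    · exact Or.inl ⟨hy, h⟩
    · exact Or.inr ⟨h, hy⟩
  have f1 : volume {y ∈ F | |g y| ≤ 2 * A'} ≠ ⊤ := measure_ne_top_of_subset (fun y hy => hy.1) hfin
  have f2 : volume ({x | 2 * A' ≤ |g x|} ∩ F) ≠ ⊤ := measure_ne_top_of_subset (fun y hy => hy.2) hfin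
  have h1 : volume.real F ≤ volume.real {y ∈ F | |g y| ≤ 2 * A'} +
      volume.real ({x | 2 * A' ≤ |g x|} ∩ F) :=
    (measureReal_mono hsub (measure_union_ne_top f1 f2)).trans (measureReal_union_le _ _)
  rw [ENNReal.ofReal_le_iff_le_toReal f1]
  simp only [measureReal_def] at *
  linarith

/-- Propagation of smallness from measurable sets for real analytic functions,
one-dimensional case. -/
theorem propagation_smallness_1d (ρ κ : ℝ) (hρ : ρ ∈ Set.Ioc (0:ℝ) 1)
    (hκ : κ ∈ Set.Ioc (0:ℝ) 1) :
    ∃ C : ℝ, 1 ≤ C ∧ ∃ θ : ℝ, θ ∈ Set.Ioo (0:ℝ) 1 ∧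
      ∀ (a s M : ℝ) (g : ℝ → ℝ) (F : Set ℝ),
        0 < s → 0 < M →
        ContDiffOn ℝ (⊤ : ℕ∞) g (Set.Icc a (a + s)) →
        (∀ k : ℕ, ∀ x ∈ Set.Icc a (a + s),
          |iteratedDerivWithin k g (Set.Icc a (a + s)) x| ≤
            M * (Nat.factorial k) * ((s * ρ) ^ k)⁻¹) →
        MeasurableSet F → F ⊆ Set.Icc a (a + s) →
        ENNReal.ofReal (κ * s) ≤ volume F →
        ∀ x ∈ Set.Icc a (a + s),
          |g x| ≤ C * M ^ (1 - θ) *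
            (((volume F).toReal)⁻¹ * ∫ y in F, |g y|) ^ θ := by
  obtain ⟨hρ0, hρ1⟩ := hρ
  obtain ⟨hκ0, hκ1⟩ := hκ
  obtain ⟨θ, hθ, hopt⟩ := psm_opt (6 / (κ / 4)) (by rw [lt_div_iff₀ (by positivity)]; linarith)
  set N := ⌈192 / (ρ * κ)⌉₊ with hN
  have hθN0 : 0 < θ ^ N := pow_pos hθ.1 _
  have hθN1 : θ ^ N ≤ 1 := pow_le_one₀ hθ.1.le hθ.2.le
  have hΘ0 : 0 < θ ^ (N+1) := pow_pos hθ.1 _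
  have hΘ1 : θ ^ (N+1) < 1 := pow_lt_one₀ hθ.1.le hθ.2 (by omega)
  refine ⟨2 * 6 ^ (N+1), ?_, θ ^ (N+1), ⟨hΘ0, hΘ1⟩, ?_⟩
  · have : (1:ℝ) ≤ 6 ^ (N+1) := one_le_pow₀ (by norm_num)
    linarith
  intro a s M g F hs hM hg hb hF hFs hV x hx
  have hfin : volume F ≠ ⊤ := measure_ne_top_of_subset hFs (by simp)
  have hint : IntegrableOn (fun y => |g y|) F :=
    ((hg.continuousOn.integrableOn_Icc).mono_set hFs).abs
  set A := (((volume F).toReal)⁻¹ * ∫ y in F, |g y|) with hA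
  have hA0 : 0 ≤ A := by
    rw [hA]
    exact mul_nonneg (by positivity) (integral_nonneg fun y => abs_nonneg (g y))
  have key : ∀ A' > A, |g x| ≤ 2 * 6 ^ (N+1) * M ^ (1 - θ ^ (N+1)) * A' ^ (θ ^ (N+1)) := by
    intro A' hAA'
    have hA' : 0 < A' := hA0.trans_lt hAA'
    have hE1 := psm_markov s κ A' g F hs hκ0 hA' hF hfin hV hint hAA'
    set E1 := {y ∈ F | |g y| ≤ 2 * A'} with hE1d
    set r := s * ρ * κ / 96 with hr
    have hr0 : 0 < r := by positivity
    have hρκ : ρ * κ ≤ 1 := by nlinarith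
    have hrs : r ≤ s := by rw [hr]; nlinarith
    have H : ∀ (u : ℝ) (E : Set ℝ) (A : ℝ), a ≤ u → u + r ≤ a + s → E ⊆ Icc u (u + r) →
        ENNReal.ofReal (κ / 4 * r) ≤ volume E → 0 < A → (∀ x ∈ E, |g x| ≤ A) →
        ∀ y ∈ Icc u (u + r), |g y| ≤ 6 * M * (A / M) ^ θ := by
      intro u E A h1 h2 h3 h4 h5 h6 y hy
      apply hopt A M _ h5 hM
      · have := hb 0 y ⟨h1.trans hy.1, hy.2.trans h2⟩
        simpa using this
      · intro m
        refine psm_local g a (a+s) (s * ρ) M (by positivity) hM hg hb u r hr0 h1 h2 (κ / 4)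
          (by positivity) (by linarith) (le_of_eq ?_) E h3 h4 A h5.le h6 m y hy
        rw [hr]; field_simp; norm_num
    obtain ⟨c, hc1, hc2, hc3⟩ := psm_pigeon a s r (κ / 2) hr0 hrs E1
      (fun y hy => hFs hy.1) (by positivity) hE1
    have hB := H c (E1 ∩ Icc c (c + r)) (2 * A') hc1 hc2 inter_subset_right
      (by rwa [show κ / 4 = κ / 2 / 2 by ring]) (by positivity) (fun y hy => hy.1.2)
    have hq : 0 < 2 * A' / M := by positivity
    have hqθ : 0 < (2 * A' / M) ^ θ := Real.rpow_pos_of_pos hq _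
    have hch := psm_chain g a (a + s) M (κ / 4) θ r hM hθ (by linarith) hr0 H c
      (6 * M * (2 * A' / M) ^ θ) hc1 hc2 (by positivity) hB N
    have hc' : ∃ c', a ≤ c' ∧ c' + r ≤ a + s ∧ x ∈ Icc c' (c' + r) := by
      rcases le_total (x + r) (a + s) with h | h
      · exact ⟨x, hx.1, h, le_rfl, by linarith⟩
      · exact ⟨a + s - r, by linarith, by linarith, by linarith, by linarith [hx.2]⟩
    obtain ⟨c', g1, g2, g3⟩ := hc'
    have hNr : s ≤ N * (r / 2) := by
      have h1 := Nat.le_ceil (192 / (ρ * κ))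
      rw [← hN] at h1
      calc s = 192 / (ρ * κ) * (r / 2) := by rw [hr]; field_simp; norm_num
        _ ≤ _ := by gcongr
    have hfinal := hch c' g1 g2 (by
      refine le_trans ?_ hNr
      rw [abs_le]; constructor <;> linarith) x g3
    refine hfinal.trans ?_
    have e1 : 6 * M * (2 * A' / M) ^ θ / M = 6 * (2 * A' / M) ^ θ := by field_simp
    rw [e1, Real.mul_rpow (by norm_num) hqθ.le, ← Real.rpow_mul hq.le, ← pow_succ']
    have e2 : (6:ℝ) ^ (θ ^ N) ≤ 6 := by
      have := Real.rpow_le_rpow_of_exponent_le (x := (6:ℝ)) (by norm_num) hθN1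
      simpa using this
    have e3 : (2:ℝ) ^ (θ ^ (N+1)) ≤ 2 := by
      have := Real.rpow_le_rpow_of_exponent_le (x := (2:ℝ)) (by norm_num) hΘ1.le
      simpa using this
    have e4 : (2 * A' / M) ^ (θ ^ (N+1)) =
        2 ^ (θ ^ (N+1)) * (A' ^ (θ ^ (N+1)) / M ^ (θ ^ (N+1))) := by
      rw [mul_div_assoc, Real.mul_rpow (by norm_num) (by positivity),
        Real.div_rpow hA'.le hM.le]
    rw [e4, Real.rpow_sub hM, Real.rpow_one]
    have p1 : 0 < A' ^ (θ ^ (N+1)) := Real.rpow_pos_of_pos hA' _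
    have p2 : 0 < M ^ (θ ^ (N+1)) := Real.rpow_pos_of_pos hM _
    calc _ ≤ 6 ^ N * M * (6 * (2 * (A' ^ (θ ^ (N+1)) / M ^ (θ ^ (N+1))))) := by gcongr
      _ = _ := by rw [pow_succ (6:ℝ)]; ring
  have hcont : Filter.Tendsto (fun A' : ℝ => 2 * 6 ^ (N+1) * M ^ (1 - θ ^ (N+1)) *
      A' ^ (θ ^ (N+1))) (nhdsWithin A (Ioi A))
      (nhds (2 * 6 ^ (N+1) * M ^ (1 - θ ^ (N+1)) * A ^ (θ ^ (N+1)))) := by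
    apply Filter.Tendsto.const_mul
    exact ((Real.continuousAt_rpow_const A _ (Or.inr hΘ0.le)).tendsto).mono_left
      nhdsWithin_le_nhds
  exact ge_of_tendsto hcont (by filter_upwards [self_mem_nhdsWithin] with A' h using key A' h)
end

section
/- Let T > 0 and let E ⊆ (0,T) be a Lebesgue measurable set of positive measure. Let l ∈ (0,T) be a right Lebesgue density point of E, i.e. lim_{λ → 0⁺} |E ∩ (l, l+λ)| / λ = 1. Then for each q ∈ (0,1) there exists a monotonically decreasing sequence {ℓ_n}_{n ≥ 1} ⊆ (l, T] converging to l such that for every n ≥ 1: (i) ℓ_{n+1} − ℓ_{n+2} = q (ℓ_n − ℓ_{n+1}), and (ii) |E ∩ (ℓ_{n+1}, ℓ_n)| ≥ (ℓ_n − ℓ_{n+1}) / 3. -/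
open MeasureTheory Set Filter

/-- Selection of a geometric-like sequence of times around a right Lebesgue density
point of a measurable set `E ⊆ (0,T)`. -/
theorem density_point_sequence (T : ℝ) (hT : 0 < T) (E : Set ℝ)
    (hE_meas : MeasurableSet E) (hE_sub : E ⊆ Set.Ioo 0 T)
    (hE_pos : 0 < volume E)
    (l : ℝ) (hl : l ∈ Set.Ioo 0 T)
    (hdensity : Tendsto (fun lam : ℝ => (volume (E ∩ Set.Ioo l (l + lam))).toReal / lam)
      (nhdsWithin 0 (Set.Ioi 0)) (nhds 1)) :
    ∀ q ∈ Set.Ioo (0:ℝ) 1, ∃ ℓ : ℕ → ℝ,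
      (∀ n, 1 ≤ n → ℓ (n + 1) < ℓ n) ∧
      (∀ n, 1 ≤ n → ℓ n ∈ Set.Ioc l T) ∧
      Tendsto ℓ atTop (nhds l) ∧
      (∀ n, 1 ≤ n → ℓ (n + 1) - ℓ (n + 2) = q * (ℓ n - ℓ (n + 1))) ∧
      (∀ n, 1 ≤ n →
        (ℓ n - ℓ (n + 1)) / 3 ≤ (volume (E ∩ Set.Ioo (ℓ (n + 1)) (ℓ n))).toReal) := by
  rintro q ⟨hq0, hq1⟩
  have hev : ∀ᶠ lam in nhdsWithin (0:ℝ) (Set.Ioi 0),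
      1 - (1 - q) / 2 < (volume (E ∩ Set.Ioo l (l + lam))).toReal / lam :=
    hdensity.eventually (lt_mem_nhds (by linarith))
  obtain ⟨δ, hδ, hδ'⟩ := mem_nhdsGT_iff_exists_Ioc_subset.1 hev
  have hδ0 : (0:ℝ) < δ := hδ
  obtain ⟨hl0, hlT⟩ := hl
  obtain ⟨c, hc0, hcδ, hcT⟩ : ∃ c : ℝ, 0 < c ∧ c ≤ δ ∧ c ≤ T - l :=
    ⟨min δ (T - l), lt_min hδ0 (by linarith), min_le_left _ _, min_le_right _ _⟩
  have hpos : ∀ n : ℕ, 0 < c * q ^ n := fun n => by positivity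
  have hle : ∀ n : ℕ, c * q ^ n ≤ c := fun n =>
    mul_le_of_le_one_right hc0.le (pow_le_one₀ hq0.le hq1.le)
  have key : ∀ x : ℝ, 0 < x → x ≤ δ →
      (x - q * x) / 3 ≤ (volume (E ∩ Set.Ioo (l + q * x) (l + x))).toReal := by
    intro x hx hxδ
    have h1 : 1 - (1 - q) / 2 < (volume (E ∩ Set.Ioo l (l + x))).toReal / x := hδ' ⟨hx, hxδ⟩
    rw [lt_div_iff₀ hx] at h1
    have hfin : volume (E ∩ Set.Ioo (l + q * x) (l + x)) ≠ ⊤ :=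
      ((measure_mono inter_subset_right).trans_lt measure_Ioo_lt_top).ne
    have h2 : volume (E ∩ Set.Ioo l (l + x)) ≤
        volume (Set.Ioc l (l + q * x)) + volume (E ∩ Set.Ioo (l + q * x) (l + x)) := by
      refine (measure_mono ?_).trans (measure_union_le _ _)
      rintro y ⟨hy, hy1, hy2⟩
      rcases le_or_gt y (l + q * x) with h | h
      · exact Or.inl ⟨hy1, h⟩
      · exact Or.inr ⟨hy, h, hy2⟩
    have h3 := ENNReal.toReal_mono (ENNReal.add_ne_top.2 ⟨measure_Ioc_lt_top.ne, hfin⟩) h2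
    rw [ENNReal.toReal_add measure_Ioc_lt_top.ne hfin, Real.volume_Ioc,
      ENNReal.toReal_ofReal (by nlinarith)] at h3
    nlinarith
  refine ⟨fun n => l + c * q ^ n, ?_, ?_, ?_, ?_, ?_⟩
  · intro n _
    have := hpos n
    simp only [pow_succ]
    nlinarith
  · intro n _
    have := hpos n
    have := hle n
    constructor <;> simp only <;> linarith
  · have := ((tendsto_pow_atTop_nhds_zero_of_lt_one hq0.le hq1).const_mul c).const_add l
    simpa using this
  · intro n _
    simp only [pow_succ]
    ring
  · intro n _
    have h := key (c * q ^ n) (hpos n) ((hle n).trans hcδ)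
    have e : c * q ^ (n + 1) = q * (c * q ^ n) := by ring
    simp only [e]
    convert h using 1
    ring
end

section
/- Let (a_k)_{k ≥ 1} be a square-summable sequence of real numbers, let (w_k)_{k ≥ 1} be a sequence of nonnegative reals, let R > 0, t > 0, γ ∈ ℕ, and let τ ∈ ℝ with |τ| ≤ 2R. Then Σ_{k ≥ 1} a_k² · w_k^{4γ} · e^{−2 w_k² t + 2 w_k τ} ≤ (2/t)^{2γ} · (γ!)² · e^{4R²/t} · Σ_{k ≥ 1} a_k². -/
/-- Key quantitative estimate for eigenfunction expansions: a weighted sum of squares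
is controlled by the plain sum of squares. -/
theorem weighted_sum_sq_estimate (a w : ℕ → ℝ) (ha : Summable (fun k => (a k) ^ 2))
    (hw : ∀ k, 0 ≤ w k) (R t : ℝ) (hR : 0 < R) (ht : 0 < t)
    (γ : ℕ) (τ : ℝ) (hτ : |τ| ≤ 2 * R) :
    (∑' k : ℕ, (a k) ^ 2 * (w k) ^ (4 * γ) *
        Real.exp (-2 * (w k) ^ 2 * t + 2 * (w k) * τ)) ≤
      (2 / t) ^ (2 * γ) * ((Nat.factorial γ : ℝ)) ^ 2 * Real.exp (4 * R ^ 2 / t) *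
        ∑' k : ℕ, (a k) ^ 2 := by
  have h1 : ∀ x : ℝ, x ^ (4 * γ) ≤
      (2 / t) ^ (2 * γ) * ((Nat.factorial γ : ℝ)) ^ 2 * Real.exp (x ^ 2 * t) := by
    intro x
    have hf : (0 : ℝ) < (Nat.factorial γ : ℝ) := by positivity
    have h := Real.pow_div_factorial_le_exp (x ^ 2 * t / 2) (by positivity) γ
    rw [div_le_iff₀ hf] at h
    have h2 := pow_le_pow_left₀ (by positivity) h 2
    have e1 : x ^ (4 * γ) = (2 / t) ^ (2 * γ) * ((x ^ 2 * t / 2) ^ γ) ^ 2 := by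
      rw [← pow_mul, mul_comm γ 2, ← mul_pow]
      have : 2 / t * (x ^ 2 * t / 2) = x ^ 2 := by field_simp
      rw [this, ← pow_mul]
      congr 1
      ring
    have e2 : Real.exp (x ^ 2 * t) = Real.exp (x ^ 2 * t / 2) ^ 2 := by
      rw [← Real.exp_nat_mul]
      congr 1
      push_cast
      ring
    rw [e1, e2]
    calc _ ≤ (2 / t) ^ (2 * γ) * (Real.exp (x ^ 2 * t / 2) * (Nat.factorial γ : ℝ)) ^ 2 := by
          gcongr
      _ = _ := by ring
  have h3 : ∀ x : ℝ, -2 * x ^ 2 * t + 2 * x * τ ≤ -(x ^ 2 * t) + 4 * R ^ 2 / t := by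
    intro x
    have hs : τ ^ 2 ≤ 4 * R ^ 2 := by
      have := sq_le_sq' (by linarith [(abs_le.mp hτ).1]) (abs_le.mp hτ).2
      linarith
    have : -(x ^ 2 * t) + 2 * x * τ ≤ 4 * R ^ 2 / t := by
      rw [le_div_iff₀ ht]
      nlinarith [sq_nonneg (x * t - τ)]
    linarith
  have key : ∀ k, (a k) ^ 2 * (w k) ^ (4 * γ) *
        Real.exp (-2 * (w k) ^ 2 * t + 2 * (w k) * τ) ≤
      (2 / t) ^ (2 * γ) * ((Nat.factorial γ : ℝ)) ^ 2 * Real.exp (4 * R ^ 2 / t) *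
        (a k) ^ 2 := by
    intro k
    have hwk := hw k
    calc _ ≤ (a k) ^ 2 * ((2 / t) ^ (2 * γ) * ((Nat.factorial γ : ℝ)) ^ 2 *
            Real.exp ((w k) ^ 2 * t)) *
            Real.exp (-((w k) ^ 2 * t) + 4 * R ^ 2 / t) := by
          gcongr (a k) ^ 2 * ?_ * Real.exp ?_
          · exact h1 _
          · exact h3 _
      _ = _ := by
          rw [Real.exp_add, Real.exp_neg]
          field_simp
  have hs := ha.mul_left
    ((2 / t) ^ (2 * γ) * ((Nat.factorial γ : ℝ)) ^ 2 * Real.exp (4 * R ^ 2 / t))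
  rw [← tsum_mul_left]
  refine Summable.tsum_le_tsum key (Summable.of_nonneg_of_le (fun k => ?_) key hs) hs
  have hwk := hw k
  positivity
end

section
/- Let H be a real Hilbert space, T > 0 and M > 0. Let z : (0,T) → H be Bochner integrable with z(t) ≠ 0 for almost every t ∈ (0,T). Let u* : (0,T) → H be strongly measurable with ‖u*(t)‖ ≤ M for almost every t ∈ (0,T), and suppose that for every strongly measurable u : (0,T) → H with ‖u(t)‖ ≤ M for almost every t, one has ∫₀ᵀ ⟨z(t), u(t)⟩ dt ≤ ∫₀ᵀ ⟨z(t), u*(t)⟩ dt. Then u*(t) = M · z(t) / ‖z(t)‖ for almost every t ∈ (0,T). -/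
open MeasureTheory Set
open scoped RealInnerProductSpace

/-- Bang-bang characterization of maximizers of `u ↦ ∫ ⟨z, u⟩` over the pointwise
ball of radius `M` in a real Hilbert space. -/
theorem bang_bang_maximizer
    (H : Type*) [NormedAddCommGroup H] [InnerProductSpace ℝ H] [CompleteSpace H]
    (T M : ℝ) (hT : 0 < T) (hM : 0 < M)
    (z : ℝ → H) (hz_int : IntegrableOn z (Set.Ioo 0 T) volume)
    (hz_ne : ∀ᵐ t ∂(volume.restrict (Set.Ioo 0 T)), z t ≠ 0)
    (ustar : ℝ → H)
    (hustar_meas : AEStronglyMeasurable ustar (volume.restrict (Set.Ioo 0 T)))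
    (hustar_bdd : ∀ᵐ t ∂(volume.restrict (Set.Ioo 0 T)), ‖ustar t‖ ≤ M)
    (hmax : ∀ u : ℝ → H,
      AEStronglyMeasurable u (volume.restrict (Set.Ioo 0 T)) →
      (∀ᵐ t ∂(volume.restrict (Set.Ioo 0 T)), ‖u t‖ ≤ M) →
      (∫ t in Set.Ioo 0 T, ⟪z t, u t⟫) ≤ ∫ t in Set.Ioo 0 T, ⟪z t, ustar t⟫) :
    ∀ᵐ t ∂(volume.restrict (Set.Ioo 0 T)), ustar t = (M / ‖z t‖) • z t := by
  have hzm := hz_int.aestronglyMeasurable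
  have hum : AEStronglyMeasurable (fun t => (M / ‖z t‖) • z t) (volume.restrict (Set.Ioo 0 T)) :=
    ((hzm.norm.aemeasurable.const_div M).aestronglyMeasurable).smul hzm
  have hle := hmax (fun t => (M / ‖z t‖) • z t) hum (by
    filter_upwards [hz_ne] with t ht
    have h0 : 0 < ‖z t‖ := norm_pos_iff.mpr ht
    rw [norm_smul, Real.norm_of_nonneg (by positivity), div_mul_cancel₀ _ h0.ne'])
  have heq : (∫ t in Set.Ioo 0 T, ⟪z t, (M / ‖z t‖) • z t⟫) = ∫ t in Set.Ioo 0 T, M * ‖z t‖ := by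
    apply integral_congr_ae
    filter_upwards [hz_ne] with t ht
    have h0 : 0 < ‖z t‖ := norm_pos_iff.mpr ht
    rw [real_inner_smul_right, real_inner_self_eq_norm_sq]
    field_simp
  have hi1 : Integrable (fun t => M * ‖z t‖) (volume.restrict (Set.Ioo 0 T)) :=
    hz_int.norm.const_mul M
  have hbd : ∀ᵐ t ∂(volume.restrict (Set.Ioo 0 T)), |⟪z t, ustar t⟫| ≤ M * ‖z t‖ := by
    filter_upwards [hustar_bdd] with t ht
    calc |⟪z t, ustar t⟫| ≤ ‖z t‖ * ‖ustar t‖ := abs_real_inner_le_norm _ _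
      _ ≤ ‖z t‖ * M := by gcongr
      _ = M * ‖z t‖ := mul_comm _ _
  have hi2 : Integrable (fun t => ⟪z t, ustar t⟫) (volume.restrict (Set.Ioo 0 T)) :=
    hi1.mono' (hzm.inner hustar_meas) hbd
  have hnn : 0 ≤ᵐ[volume.restrict (Set.Ioo 0 T)] fun t => M * ‖z t‖ - ⟪z t, ustar t⟫ := by
    filter_upwards [hbd] with t ht
    exact sub_nonneg.mpr ((le_abs_self _).trans ht)
  have hint : (∫ t in Set.Ioo 0 T, (M * ‖z t‖ - ⟪z t, ustar t⟫)) = 0 := by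
    apply le_antisymm _ (integral_nonneg_of_ae hnn)
    rw [integral_sub hi1 hi2, ← heq]
    exact sub_nonpos.mpr hle
  have hzero := (integral_eq_zero_iff_of_nonneg_ae hnn (hi1.sub hi2)).mp hint
  filter_upwards [hzero, hz_ne, hustar_bdd] with t h1 h2 h3
  have h0 : 0 < ‖z t‖ := norm_pos_iff.mpr h2
  have h4 : ⟪ustar t, z t⟫ = M * ‖z t‖ := by
    rw [real_inner_comm]
    have : M * ‖z t‖ - ⟪z t, ustar t⟫ = 0 := h1
    linarith
  have h5 : ‖ustar t - (M / ‖z t‖) • z t‖ ^ 2 = ‖ustar t‖ ^ 2 - M ^ 2 := by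
    rw [norm_sub_sq_real, real_inner_smul_right, h4, norm_smul,
      Real.norm_of_nonneg (by positivity), div_mul_cancel₀ _ h0.ne']
    field_simp
    ring
  have h6 : ‖ustar t‖ ^ 2 ≤ M ^ 2 := by gcongr
  have h7 : ‖ustar t - (M / ‖z t‖) • z t‖ ^ 2 = 0 :=
    le_antisymm (by linarith) (sq_nonneg _)
  exact sub_eq_zero.mp (norm_eq_zero.mp (pow_eq_zero_iff two_ne_zero |>.mp h7))
end

section
/- Let C > 0, θ ∈ (0,1) and p > 0. Then there exist q ∈ (0,1) and K > 0, depending only on C, θ and p, with the following property: for every strictly decreasing sequence (ℓ_n)_{n ≥ 1} of real numbers whose gaps d_n := ℓ_n − ℓ_{n+1} > 0 satisfy d_{n+1} = q · d_n for all n ≥ 1, every bounded sequence (a_n)_{n ≥ 1} of nonnegative reals, and every sequence (B_n)_{n ≥ 1} of nonnegative reals such that a_n ≤ B_n^{θ} · ( e^{C · d_n^{−p}} · a_{n+1} )^{1−θ} for all n ≥ 1, one has a₁ ≤ e^{K · d₁^{−p}} · Σ_{n ≥ 1} B_n. -/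
theorem tsm_step {C θ K x a a' B : ℝ} (hC : 0 < C) (h0 : 0 < θ) (h1 : θ < 1) (hK : K = 2 * C / θ)
    (hx : 0 < x) (ha' : 0 ≤ a') (hB : 0 ≤ B)
    (h : a ≤ B ^ θ * (Real.exp (C * x) * a') ^ (1 - θ)) :
    Real.exp (-(K * x)) * a ≤ B + Real.exp (-(K * ((1 + θ / 2) * x))) * a' := by
  have hKθ : K * θ = 2 * C := by rw [hK]; field_simp
  have e1 : Real.exp (-(K * x)) * a ≤
      Real.exp (-(K * x)) * (B ^ θ * (Real.exp (C * x) * a') ^ (1 - θ)) := by gcongr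
  refine e1.trans ?_
  have e3 : Real.exp (-(K * x)) * (B ^ θ * (Real.exp (C * x) * a') ^ (1 - θ)) =
      Real.exp (-(K * x) + C * x * (1 - θ)) * (B ^ θ * a' ^ (1 - θ)) := by
    rw [Real.mul_rpow (Real.exp_pos _).le ha', ← Real.exp_mul, Real.exp_add]; ring
  have e4 : B ^ θ * (Real.exp (-(K * ((1 + θ / 2) * x))) * a') ^ (1 - θ) =
      Real.exp (-(K * ((1 + θ / 2) * x)) * (1 - θ)) * (B ^ θ * a' ^ (1 - θ)) := by
    rw [Real.mul_rpow (Real.exp_pos _).le ha', ← Real.exp_mul]; ring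
  have e5 : Real.exp (-(K * x)) * (B ^ θ * (Real.exp (C * x) * a') ^ (1 - θ)) ≤
      B ^ θ * (Real.exp (-(K * ((1 + θ / 2) * x))) * a') ^ (1 - θ) := by
    rw [e3, e4]
    have hP : 0 ≤ B ^ θ * a' ^ (1 - θ) := by positivity
    refine mul_le_mul_of_nonneg_right (Real.exp_le_exp.2 ?_) hP
    have : -(K * ((1 + θ / 2) * x)) * (1 - θ) - (-(K * x) + C * x * (1 - θ))
        = (K * θ) * x - (K * θ) * x * (1 - θ) / 2 - C * x * (1 - θ) := by ring
    rw [hKθ] at this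
    nlinarith [mul_pos (mul_pos hC hx) h0]
  refine e5.trans ?_
  have hY : 0 ≤ Real.exp (-(K * ((1 + θ / 2) * x))) * a' := by positivity
  have := Real.geom_mean_le_arith_mean2_weighted h0.le (by linarith : 0 ≤ 1 - θ) hB hY (by ring)
  nlinarith [mul_nonneg h0.le hY, mul_nonneg (by linarith : 0 ≤ 1 - θ) hB]

/-- Abstract telescoping series method: from a two-point interpolation inequality along
a geometrically decreasing sequence of gaps, deduce an observability-type inequality.
The sum on the right is taken in `ℝ≥0∞` so that it is allowed to be infinite. -/
theorem telescoping_series_method (C θ p : ℝ) (hC : 0 < C) (hθ : θ ∈ Set.Ioo (0:ℝ) 1)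
    (hp : 0 < p) :
    ∃ q ∈ Set.Ioo (0:ℝ) 1, ∃ K : ℝ, 0 < K ∧
      ∀ (ℓ a B : ℕ → ℝ),
        (∀ n, 1 ≤ n → 0 < ℓ n - ℓ (n + 1)) →
        (∀ n, 1 ≤ n → ℓ (n + 1) - ℓ (n + 2) = q * (ℓ n - ℓ (n + 1))) →
        (∀ n, 1 ≤ n → 0 ≤ a n) →
        (∃ A : ℝ, ∀ n, 1 ≤ n → a n ≤ A) →
        (∀ n, 1 ≤ n → 0 ≤ B n) →
        (∀ n, 1 ≤ n → a n ≤ (B n) ^ θ *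
          (Real.exp (C * (ℓ n - ℓ (n + 1)) ^ (-p)) * a (n + 1)) ^ (1 - θ)) →
        ENNReal.ofReal (a 1) ≤
          ENNReal.ofReal (Real.exp (K * (ℓ 1 - ℓ 2) ^ (-p))) *
            ∑' n : ℕ, ENNReal.ofReal (B (n + 1)) := by
  obtain ⟨h0, h1⟩ := hθ
  have hr : 1 < 1 + θ / 2 := by linarith
  have hq0 : 0 < (1 + θ / 2) ^ (-(1 / p)) := by positivity
  have hqp : ((1 + θ / 2) ^ (-(1 / p))) ^ (-p) = 1 + θ / 2 := by
    rw [← Real.rpow_mul (by linarith)]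
    have : -(1 / p) * -p = 1 := by field_simp
    rw [this, Real.rpow_one]
  have hKpos : 0 < 2 * C / θ := by positivity
  refine ⟨(1 + θ / 2) ^ (-(1 / p)), ⟨hq0, ?_⟩, 2 * C / θ, hKpos, ?_⟩
  · apply Real.rpow_lt_one_of_one_lt_of_neg hr
    have : 0 < 1 / p := by positivity
    linarith
  generalize (1 + θ / 2) ^ (-(1 / p)) = q at hq0 hqp
  obtain ⟨K, hK⟩ : ∃ K, K = 2 * C / θ := ⟨_, rfl⟩
  rw [← hK] at hKpos ⊢
  rintro ℓ a B hd hgeo ha ⟨A, hA⟩ hB h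
  set x : ℕ → ℝ := fun n => (ℓ (n + 1) - ℓ (n + 2)) ^ (-p) with hxdef
  have hxpos : ∀ n, 0 < x n := fun n => Real.rpow_pos_of_pos (hd (n + 1) (by omega)) _
  have hxs : ∀ n, x (n + 1) = (1 + θ / 2) * x n := by
    intro n
    have := hgeo (n + 1) (by omega)
    simp only [hxdef]
    rw [this,
      Real.mul_rpow hq0.le (hd (n + 1) (by omega)).le, hqp]
  have hxn : ∀ n, x n = (1 + θ / 2) ^ n * x 0 := by
    intro n
    induction n with
    | zero => simp
    | succ n ih => rw [hxs, ih]; ring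
  set f : ℕ → ℝ := fun n => Real.exp (-(K * x n)) * a (n + 1) with hf
  have hf0 : ∀ n, 0 ≤ f n := fun n => mul_nonneg (Real.exp_pos _).le (ha _ (by omega))
  have hstep : ∀ n, f n ≤ B (n + 1) + f (n + 1) := by
    intro n
    have := tsm_step hC h0 h1 hK (hxpos n) (ha (n + 2) (by omega)) (hB (n + 1) (by omega))
      (h (n + 1) (by omega))
    simp only [hf, hxs]
    exact this
  have hsum : ∀ N, ENNReal.ofReal (f 0) ≤
      ∑ n ∈ Finset.range N, ENNReal.ofReal (B (n + 1)) + ENNReal.ofReal (f N) := by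
    intro N
    induction N with
    | zero => simp
    | succ N ih =>
      refine ih.trans ?_
      rw [Finset.sum_range_succ, add_assoc, ← ENNReal.ofReal_add (hB _ (by omega)) (hf0 _)]
      gcongr
      exact hstep N
  have hxt : Filter.Tendsto x Filter.atTop Filter.atTop := by
    rw [show x = fun n => (1 + θ / 2) ^ n * x 0 from funext hxn]
    exact (tendsto_pow_atTop_atTop_of_one_lt hr).atTop_mul_const (hxpos 0)
  have hft : Filter.Tendsto f Filter.atTop (nhds 0) := by
    have he : Filter.Tendsto (fun n => Real.exp (-(K * x n)) * A) Filter.atTop (nhds 0) := by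
      have := (Real.tendsto_exp_neg_atTop_nhds_zero.comp (hxt.const_mul_atTop hKpos)).mul_const A
      simpa using this
    refine squeeze_zero hf0 (fun n => ?_) he
    exact mul_le_mul_of_nonneg_left (hA _ (by omega)) (Real.exp_pos _).le
  have hlim : ENNReal.ofReal (f 0) ≤ ∑' n : ℕ, ENNReal.ofReal (B (n + 1)) := by
    have ht : Filter.Tendsto (fun N => ∑' n : ℕ, ENNReal.ofReal (B (n + 1)) + ENNReal.ofReal (f N))
        Filter.atTop (nhds (∑' n : ℕ, ENNReal.ofReal (B (n + 1)) + ENNReal.ofReal 0)) :=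
      tendsto_const_nhds.add (ENNReal.tendsto_ofReal hft)
    rw [ENNReal.ofReal_zero, add_zero] at ht
    refine ge_of_tendsto' ht (fun N => (hsum N).trans ?_)
    gcongr
    exact ENNReal.sum_le_tsum _
  have ha1 : a 1 = Real.exp (K * (ℓ 1 - ℓ 2) ^ (-p)) * f 0 := by
    simp only [hf, hxdef, zero_add]
    rw [← mul_assoc, ← Real.exp_add, add_neg_cancel, Real.exp_zero, one_mul]
  rw [ha1, ENNReal.ofReal_mul (Real.exp_pos _).le]
  gcongr
end

section
/- Let H be a real Hilbert space, T > 0, and let z*, z : (0,T) → H be Bochner integrable with z*(t) ≠ 0 for almost every t ∈ (0,T). Define φ : ℝ → ℝ by φ(h) = (1/2) · ( ∫₀ᵀ ‖z*(t) + h z(t)‖ dt )². Then φ is differentiable at h = 0 and φ'(0) = ( ∫₀ᵀ ⟨z*(t), z(t)⟩ / ‖z*(t)‖ dt ) · ( ∫₀ᵀ ‖z*(t)‖ dt ). -/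
open MeasureTheory Set
open scoped RealInnerProductSpace

/-- Differentiability at the origin of the squared `L¹(0,T;H)`-norm of a perturbation,
with the Gâteaux derivative given by
`(∫ ⟨z*, z⟩/‖z*‖) · (∫ ‖z*‖)`. -/
theorem hasDerivAt_sq_L1_norm_perturbation
    (H : Type*) [NormedAddCommGroup H] [InnerProductSpace ℝ H] [CompleteSpace H]
    (T : ℝ) (hT : 0 < T)
    (zs z : ℝ → H)
    (hzs_int : IntegrableOn zs (Set.Ioo 0 T) volume)
    (hz_int : IntegrableOn z (Set.Ioo 0 T) volume)
    (hzs_ne : ∀ᵐ t ∂(volume.restrict (Set.Ioo 0 T)), zs t ≠ 0) :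
    HasDerivAt
      (fun h : ℝ => (1 / 2) * (∫ t in Set.Ioo 0 T, ‖zs t + h • z t‖) ^ 2)
      ((∫ t in Set.Ioo 0 T, ⟪zs t, z t⟫ / ‖zs t‖) * ∫ t in Set.Ioo 0 T, ‖zs t‖)
      0 := by
  have key : HasDerivAt (fun h : ℝ => ∫ t in Set.Ioo 0 T, ‖zs t + h • z t‖)
      (∫ t in Set.Ioo 0 T, ⟪zs t, z t⟫ / ‖zs t‖) 0 := by
    refine (hasDerivAt_integral_of_dominated_loc_of_lip
      (F := fun (h : ℝ) t => ‖zs t + h • z t‖) (bound := fun t => ‖z t‖)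
      (s := Set.univ) Filter.univ_mem ?_ ?_ ?_ ?_ hz_int.norm ?_).2
    · exact Filter.Eventually.of_forall fun h =>
        (hzs_int.aestronglyMeasurable.add (hz_int.aestronglyMeasurable.const_smul h)).norm
    · simpa using hzs_int.norm
    · have h1 := (hzs_int.aestronglyMeasurable.inner (𝕜 := ℝ)
        hz_int.aestronglyMeasurable).aemeasurable
      exact (h1.div hzs_int.aestronglyMeasurable.norm.aemeasurable).aestronglyMeasurable
    · refine Filter.Eventually.of_forall fun t => LipschitzOnWith.of_dist_le_mul ?_
      intro x _ y _
      simp only [Real.dist_eq, Real.coe_nnabs, abs_norm]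
      refine (abs_norm_sub_norm_le _ _).trans ?_
      rw [add_sub_add_left_eq_sub, ← sub_smul, norm_smul, Real.norm_eq_abs, mul_comm]
    · filter_upwards [hzs_ne] with t ht
      have h0 : HasDerivAt (fun h : ℝ => zs t + h • z t) (z t) 0 := by
        simpa using ((hasDerivAt_id (0 : ℝ)).smul_const (z t)).const_add (zs t)
      have h1 := h0.norm_sq.sqrt (by simpa using ht)
      simp only [Real.sqrt_sq (norm_nonneg _), zero_smul, add_zero] at h1
      rw [mul_div_mul_left _ _ (two_ne_zero : (2 : ℝ) ≠ 0)] at h1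
      exact h1
  have h2 := (key.pow 2).const_mul (1 / 2 : ℝ)
  refine HasDerivAt.congr_deriv h2 ?_
  simp
  ring
end
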